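/- arXiv:1606.03691 — 4 statements merged into one kernel-verified Lean document; each statement's English description precedes it below -/
import Mathlib

section
/- Let g be a Lie algebra over a field k, let M be a Lie module over g, and let 𝔲⁺, 𝔨, 𝔲⁻ be k-subspaces of g such that g = 𝔲⁺ + 𝔨 + 𝔲⁻ (as a sum of subspaces), ⁅𝔨, 𝔲⁻⁆ ⊆ 𝔲⁻, and ⁅𝔲⁺, 𝔲⁻⁆ ⊆ 𝔨. Assume moreover that x·(y·m) = 0 for all x, y ∈ 𝔲⁻ and all m ∈ M. Let V ⊆ M be a k-subspace with a·v ∈ V for all a ∈ 𝔲⁺, all z·v ∈ V for z ∈ 𝔨, and all v ∈ V. Then the subspace W := V + span_k{x·v : x ∈ 𝔲⁻, v ∈ V} is stable under the action of every element of g, and W is the smallest g-stable subspace of M containing V (i.e. every subspace of M containing V and stable under the action of g contains W). -/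
/-!
Write `𝔰 = 𝔲⁺ + 𝔨` and `𝔲 = 𝔲⁻`. As `𝔰` preserves `V` and `L = 𝔰 + 𝔲`, the whole of `L·V` lies in
`W = V + 𝔲·V`. For `s ∈ 𝔰`, the Leibniz rule `s·(x·v) = ⁅s, x⁆·v + x·(s·v)` therefore puts
`s·(x·v)` in `L·V + 𝔲·V ⊆ W`, while for `y ∈ 𝔲` the element `y·(x·v)` vanishes.
-/

namespace SubmoduleBracket

variable {k L M : Type*} [CommRing k] [LieRing L] [LieAlgebra k L]
  [AddCommGroup M] [Module k M] [LieRingModule L M] [LieModule k L M]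

/-- The submodule `𝔥·V` spanned by the elements `⁅x, v⁆` with `x ∈ 𝔥` and `v ∈ V`. Mathlib's bracket
of a Lie ideal with a Lie submodule does not apply, as neither `𝔲⁻` nor `V` is stable under `L`.
With `M = L` acting by the adjoint action, it also gives the span of commutators `⁅𝔥, 𝔥'⁆`. -/
instance : Bracket (Submodule k L) (Submodule k M) where
  bracket := Submodule.map₂ (LieModule.toEnd k L M : L →ₗ[k] Module.End k M)

variable {𝔥 𝔥' 𝔰 𝔲 : Submodule k L} {U V V' : Submodule k M}

theorem lie_eq_span (𝔥 : Submodule k L) (V : Submodule k M) :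
    ⁅𝔥, V⁆ = Submodule.span k {m : M | ∃ x ∈ 𝔥, ∃ v ∈ V, m = ⁅x, v⁆} := by
  simp only [eq_comm (b := ⁅_, _⁆)]
  exact Submodule.map₂_eq_span_image2 _ 𝔥 V

theorem lie_le_iff : ⁅𝔥, V⁆ ≤ U ↔ ∀ x ∈ 𝔥, ∀ v ∈ V, ⁅x, v⁆ ∈ U :=
  Submodule.map₂_le

theorem lie_mem_lie {x : L} {v : M} (hx : x ∈ 𝔥) (hv : v ∈ V) : ⁅x, v⁆ ∈ ⁅𝔥, V⁆ :=
  Submodule.apply_mem_map₂ _ hx hv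

theorem lie_mono (h𝔥 : 𝔥 ≤ 𝔥') (hV : V ≤ V') : ⁅𝔥, V⁆ ≤ ⁅𝔥', V'⁆ :=
  Submodule.map₂_le_map₂ h𝔥 hV

theorem sup_lie (𝔥 𝔥' : Submodule k L) (V : Submodule k M) : ⁅𝔥 ⊔ 𝔥', V⁆ = ⁅𝔥, V⁆ ⊔ ⁅𝔥', V⁆ :=
  Submodule.map₂_sup_left _ 𝔥 𝔥' V

theorem lie_sup (𝔥 : Submodule k L) (V V' : Submodule k M) : ⁅𝔥, V ⊔ V'⁆ = ⁅𝔥, V⁆ ⊔ ⁅𝔥, V'⁆ :=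
  Submodule.map₂_sup_right _ 𝔥 V V'

theorem lie_lie_le_iff :
    ⁅𝔥, ⁅𝔥', V⁆⁆ ≤ U ↔ ∀ x ∈ 𝔥, ∀ y ∈ 𝔥', ∀ v ∈ V, ⁅x, ⁅y, v⁆⁆ ∈ U := by
  rw [lie_le_iff]
  refine forall₂_congr fun x _ => ?_
  exact lie_le_iff (U := U.comap (LieModule.toEnd k L M x))

theorem leibniz_lie_le (𝔥 𝔥' : Submodule k L) (V : Submodule k M) :
    ⁅𝔥, ⁅𝔥', V⁆⁆ ≤ ⁅⁅𝔥, 𝔥'⁆, V⁆ ⊔ ⁅𝔥', ⁅𝔥, V⁆⁆ :=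
  lie_lie_le_iff.2 fun x hx y hy v hv => leibniz_lie x y v ▸ Submodule.add_mem_sup
    (lie_mem_lie (lie_mem_lie hx hy) hv) (lie_mem_lie hy (lie_mem_lie hx hv))

theorem lie_le_sup_lie (hsum : 𝔰 ⊔ 𝔲 = ⊤) (hV : ⁅𝔰, V⁆ ≤ V) (𝔥 : Submodule k L) :
    ⁅𝔥, V⁆ ≤ V ⊔ ⁅𝔲, V⁆ :=
  calc
    ⁅𝔥, V⁆ ≤ ⁅𝔰 ⊔ 𝔲, V⁆ := lie_mono (hsum ▸ le_top) le_rfl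
    _ = ⁅𝔰, V⁆ ⊔ ⁅𝔲, V⁆ := sup_lie 𝔰 𝔲 V
    _ ≤ V ⊔ ⁅𝔲, V⁆ := sup_le_sup_right hV _

theorem lie_lie_le_sup_lie (hsum : 𝔰 ⊔ 𝔲 = ⊤) (hV : ⁅𝔰, V⁆ ≤ V) :
    ⁅𝔰, ⁅𝔲, V⁆⁆ ≤ V ⊔ ⁅𝔲, V⁆ :=
  calc
    ⁅𝔰, ⁅𝔲, V⁆⁆ ≤ ⁅⁅𝔰, 𝔲⁆, V⁆ ⊔ ⁅𝔲, ⁅𝔰, V⁆⁆ := leibniz_lie_le 𝔰 𝔲 V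
    _ ≤ V ⊔ ⁅𝔲, V⁆ :=
      sup_le (lie_le_sup_lie hsum hV ⁅𝔰, 𝔲⁆) ((lie_mono le_rfl hV).trans le_sup_right)

theorem top_lie_sup_lie_le (hsum : 𝔰 ⊔ 𝔲 = ⊤) (hV : ⁅𝔰, V⁆ ≤ V)
    (h𝔲 : ⁅𝔲, ⁅𝔲, V⁆⁆ ≤ V ⊔ ⁅𝔲, V⁆) :
    ⁅(⊤ : Submodule k L), V ⊔ ⁅𝔲, V⁆⁆ ≤ V ⊔ ⁅𝔲, V⁆ := by
  have h𝔰W : ⁅𝔰, V ⊔ ⁅𝔲, V⁆⁆ ≤ V ⊔ ⁅𝔲, V⁆ :=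
    (lie_sup 𝔰 V _).trans_le (sup_le (hV.trans le_sup_left) (lie_lie_le_sup_lie hsum hV))
  have h𝔲W : ⁅𝔲, V ⊔ ⁅𝔲, V⁆⁆ ≤ V ⊔ ⁅𝔲, V⁆ :=
    (lie_sup 𝔲 V _).trans_le (sup_le le_sup_right h𝔲)
  rw [← hsum, sup_lie]
  exact sup_le h𝔰W h𝔲W

end SubmoduleBracket

theorem smallest_submodule_containing_general
    {k L M : Type*} [CommRing k] [LieRing L] [LieAlgebra k L]
    [AddCommGroup M] [Module k M] [LieRingModule L M] [LieModule k L M]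
    {𝔰 𝔲 : Submodule k L} {V : Submodule k M}
    (hsum : 𝔰 ⊔ 𝔲 = ⊤) (hV : ⁅𝔰, V⁆ ≤ V) (h𝔲 : ⁅𝔲, ⁅𝔲, V⁆⁆ ≤ V ⊔ ⁅𝔲, V⁆) :
    (∀ y : L, ∀ w ∈ V ⊔ ⁅𝔲, V⁆, ⁅y, w⁆ ∈ V ⊔ ⁅𝔲, V⁆) ∧
      ∀ U : Submodule k M, V ≤ U → (∀ y : L, ∀ u ∈ U, ⁅y, u⁆ ∈ U) → V ⊔ ⁅𝔲, V⁆ ≤ U :=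
  ⟨fun y => SubmoduleBracket.lie_le_iff.1
      (SubmoduleBracket.top_lie_sup_lie_le hsum hV h𝔲) y Submodule.mem_top,
    fun _ hVU hU => sup_le hVU
      (SubmoduleBracket.lie_le_iff.2 fun x _ v hv => hU x v (hVU hv))⟩

/-- The Claim in the proof of Theorem 3.2: with `g = 𝔲⁺ + 𝔨 + 𝔲⁻`,
`⁅𝔨,𝔲⁻⁆ ⊆ 𝔲⁻`, `⁅𝔲⁺,𝔲⁻⁆ ⊆ 𝔨`, the action of `𝔲⁻` squaring to zero on `M`, and
`V` stable under `𝔲⁺` and `𝔨`, the subspace `W = V + 𝔲⁻·V` is the smallest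
`g`-stable subspace of `M` containing `V`. -/
theorem smallest_submodule_containing
    (k : Type*) [Field k] (L : Type*) [LieRing L] [LieAlgebra k L]
    (M : Type*) [AddCommGroup M] [Module k M] [LieRingModule L M] [LieModule k L M]
    (𝔲p 𝔨 𝔲m : Submodule k L)
    (hsum : 𝔲p ⊔ 𝔨 ⊔ 𝔲m = ⊤)
    (h1 : ∀ z ∈ 𝔨, ∀ x ∈ 𝔲m, ⁅z, x⁆ ∈ 𝔲m)
    (h2 : ∀ a ∈ 𝔲p, ∀ x ∈ 𝔲m, ⁅a, x⁆ ∈ 𝔨)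
    (hsq : ∀ x ∈ 𝔲m, ∀ y ∈ 𝔲m, ∀ m : M, ⁅x, ⁅y, m⁆⁆ = (0 : M))
    (V : Submodule k M)
    (hVp : ∀ a ∈ 𝔲p, ∀ v ∈ V, ⁅a, v⁆ ∈ V)
    (hVk : ∀ z ∈ 𝔨, ∀ v ∈ V, ⁅z, v⁆ ∈ V) :
    (∀ y : L, ∀ w ∈ V ⊔ Submodule.span k {m : M | ∃ x ∈ 𝔲m, ∃ v ∈ V, m = ⁅x, v⁆},
        ⁅y, w⁆ ∈ V ⊔ Submodule.span k {m : M | ∃ x ∈ 𝔲m, ∃ v ∈ V, m = ⁅x, v⁆}) ∧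
      ∀ U : Submodule k M, V ≤ U → (∀ y : L, ∀ u ∈ U, ⁅y, u⁆ ∈ U) →
        V ⊔ Submodule.span k {m : M | ∃ x ∈ 𝔲m, ∃ v ∈ V, m = ⁅x, v⁆} ≤ U := by
  rw [← SubmoduleBracket.lie_eq_span]
  exact smallest_submodule_containing_general hsum
    ((SubmoduleBracket.sup_lie 𝔲p 𝔨 V).trans_le
      (sup_le (SubmoduleBracket.lie_le_iff.2 hVp) (SubmoduleBracket.lie_le_iff.2 hVk)))
    (SubmoduleBracket.lie_lie_le_iff.2 fun x hx y hy v _ => hsq x hx y hy v ▸ zero_mem _)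
end

section
/- Let m ≥ 1 and let Q = fromBlocks 0 1 1 0 ∈ M_{2m}(ℂ). There exists a matrix X ∈ M_{2m}(ℂ) with Xᵀ Q + Q X = 0 whose lower-left m×m block is invertible if and only if m is even. (For the forward direction: the lower-left block of such an X is necessarily antisymmetric, and an antisymmetric m×m matrix with m odd is singular.) -/
open Matrix

/-!
The equation `Xᵀ Q + Q X = 0` constrains the lower-left block of `X` only through antisymmetry,
so the question is in which sizes an invertible antisymmetric matrix `A` exists. In odd size
`det A = det Aᵀ = -det A`, hence `2 = 0` once `det A` is cancelled; in even size the standard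
symplectic matrix is one.
-/

section

open LieAlgebra.Orthogonal

variable {n R : Type*} [Fintype n] [DecidableEq n] [CommRing R]

lemma even_card_of_isUnit_of_transpose_eq_neg (h2 : (2 : R) ≠ 0) {A : Matrix n n R}
    (hA : IsUnit A) (hskew : Aᵀ = -A) : Even (Fintype.card n) := by
  by_contra hodd
  have hdet : A.det = -A.det := calc
    A.det = (-A).det := by rw [← hskew, det_transpose]
    _ = -A.det := by rw [det_neg, (Nat.not_even_iff_odd.mp hodd).neg_one_pow, neg_one_mul]
  have hunit : IsUnit A.det := (isUnit_iff_isUnit_det A).mp hA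
  exact h2 (hunit.mul_left_eq_zero.mp (by rw [two_mul, ← eq_neg_iff_add_eq_zero, ← hdet]))

variable (R) in
lemma exists_isUnit_transpose_eq_neg_of_even_card (hn : Even (Fintype.card n)) :
    ∃ A : Matrix n n R, IsUnit A ∧ Aᵀ = -A := by
  obtain ⟨k, hk⟩ := hn
  let e : n ≃ Fin k ⊕ Fin k := Fintype.equivOfCardEq (by simpa using hk)
  refine ⟨(J (Fin k) R).submatrix e e, ?_, ?_⟩
  · rw [isUnit_submatrix_equiv, isUnit_iff_isUnit_det]
    exact isUnit_det_J (Fin k) R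
  · rw [transpose_submatrix, J_transpose, submatrix_neg, Pi.neg_apply, Pi.neg_apply]

lemma mem_typeD_iff {X : Matrix (n ⊕ n) (n ⊕ n) R} :
    X ∈ typeD n R ↔ Xᵀ * JD n R + JD n R * X = 0 := by
  rw [typeD, mem_skewAdjointMatricesLieSubalgebra, mem_skewAdjointMatricesSubmodule,
    Matrix.IsSkewAdjoint, Matrix.IsAdjointPair, mul_neg, eq_neg_iff_add_eq_zero]

lemma fromBlocks_mem_typeD_iff {A B C D : Matrix n n R} :
    fromBlocks A B C D ∈ typeD n R ↔ Bᵀ = -B ∧ Cᵀ = -C ∧ D = -Aᵀ := by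
  have hblocks : (fromBlocks A B C D)ᵀ * JD n R + JD n R * fromBlocks A B C D =
      fromBlocks (Cᵀ + C) (Aᵀ + D) (Dᵀ + A) (Bᵀ + B) := by
    simp [JD, fromBlocks_transpose, fromBlocks_multiply, fromBlocks_add]
  rw [mem_typeD_iff, hblocks, ← fromBlocks_zero, fromBlocks_inj]
  simp only [← eq_neg_iff_add_eq_zero]
  constructor
  · rintro ⟨hC, hAD, -, hB⟩
    exact ⟨hB, hC, by rw [hAD, neg_neg]⟩
  · rintro ⟨hB, hC, rfl⟩
    exact ⟨hC, by rw [neg_neg], by rw [transpose_neg, transpose_transpose], hB⟩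

lemma exists_mem_typeD_toBlocks₂₁_eq_iff {C : Matrix n n R} :
    (∃ X ∈ typeD n R, X.toBlocks₂₁ = C) ↔ Cᵀ = -C := by
  constructor
  · rintro ⟨X, hX, rfl⟩
    rw [← fromBlocks_toBlocks X, fromBlocks_mem_typeD_iff] at hX
    exact hX.2.1
  · intro hC
    exact ⟨fromBlocks 0 0 C 0, fromBlocks_mem_typeD_iff.mpr (by simpa using hC),
      toBlocks_fromBlocks₂₁ 0 0 C 0⟩

theorem orthogonal_lie_algebra_invertible_lower_left_iff_even_general (h2 : (2 : R) ≠ 0) :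
    (∃ X ∈ typeD n R, IsUnit X.toBlocks₂₁) ↔ Even (Fintype.card n) := by
  constructor
  · rintro ⟨X, hX, hunit⟩
    have hskew := exists_mem_typeD_toBlocks₂₁_eq_iff.mp ⟨X, hX, rfl⟩
    exact even_card_of_isUnit_of_transpose_eq_neg h2 hunit hskew
  · intro hn
    obtain ⟨C, hunit, hskew⟩ := exists_isUnit_transpose_eq_neg_of_even_card R hn
    obtain ⟨X, hX, rfl⟩ := exists_mem_typeD_toBlocks₂₁_eq_iff.mpr hskew
    exact ⟨X, hX, hunit⟩

end

/-- Type III case of Theorem 4.4: the split orthogonal Lie algebra `so(2m, ℂ)`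
contains an element whose lower-left `m×m` block is invertible iff `m` is even. -/
theorem orthogonal_lie_algebra_invertible_lower_left_iff_even
    (m : ℕ) (hm : 1 ≤ m) :
    (∃ X : Matrix (Fin m ⊕ Fin m) (Fin m ⊕ Fin m) ℂ,
      Xᵀ * (fromBlocks 0 1 1 0) + (fromBlocks 0 1 1 0) * X = 0 ∧
        IsUnit X.toBlocks₂₁) ↔ Even m := by
  simpa only [mem_typeD_iff, LieAlgebra.Orthogonal.JD, Fintype.card_fin] using
    orthogonal_lie_algebra_invertible_lower_left_iff_even_general (n := Fin m) (two_ne_zero' ℂ)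
end

section
/- Let g ≥ 1 and let Sp(2g, ℂ) = {A ∈ M_{2g}(ℂ) : Aᵀ J A = J} with J = fromBlocks 0 1 (-1) 0. The ℂ-linear span of the set Sp(2g, ℂ) inside the vector space M_{2g}(ℂ) is all of M_{2g}(ℂ). -/
open Matrix

/-!
The symplectic matrices form a monoid, so their span is a subalgebra. It contains `J` and, for
symmetric `X`, the difference `fromBlocks 0 X 0 0` of the symplectic matrices `fromBlocks 1 X 0 1`
and `1`; multiplying by `J` gives `fromBlocks X 0 0 0`. Every matrix unit is a product of two
symmetric matrices, namely a diagonal matrix unit and a transposition matrix, so the subalgebra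
contains `fromBlocks A 0 0 0` for every `A`. Multiplying by `J` on either side moves the block `A`
to the other three corners.
-/

theorem single_mul_swap {m n R : Type*} [DecidableEq m] [DecidableEq n] [Fintype n] [Semiring R]
    (k : m) (i j : n) (c : R) : single k i c * swap R i j = single k j c := by
  rw [swap, Equiv.Perm.permMatrix, PEquiv.mul_toMatrix_toPEquiv]
  ext a b
  simp [single_apply, eq_comm (a := i), eq_comm (a := j), Equiv.swap_apply_eq_iff]

theorem fromBlocks_corner_mem_of_isSymm_corner_mem {l R σ : Type*} [Fintype l] [Semiring R]
    [SetLike σ (Matrix (l ⊕ l) (l ⊕ l) R)] [NonUnitalSubsemiringClass σ (Matrix (l ⊕ l) (l ⊕ l) R)]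
    {S : σ} (hS : ∀ X : Matrix l l R, X.IsSymm → fromBlocks X 0 0 0 ∈ S)
    (A : Matrix l l R) : fromBlocks A 0 0 0 ∈ S := by
  classical
  induction A using Matrix.induction_on' with
  | h_zero => simp [zero_mem]
  | h_add A B hA hB => simpa [fromBlocks_add] using add_mem hA hB
  | h_std_basis i j c =>
    have hdiag := hS (single i i c) (transpose_single i i c)
    have hswap := hS (swap R i j) (isSymm_swap i j)
    simpa [fromBlocks_multiply, single_mul_swap] using mul_mem hdiag hswap

section

variable {l R : Type*} [DecidableEq l] [Fintype l] [CommRing R]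

theorem fromBlocks_eq_corners_mul_J (A B C D : Matrix l l R) :
    fromBlocks A B C D =
      fromBlocks A 0 0 0 - fromBlocks B 0 0 0 * J l R + J l R * fromBlocks C 0 0 0 -
        J l R * fromBlocks D 0 0 0 * J l R := by
  simp [J, fromBlocks_multiply, fromBlocks_add, fromBlocks_neg, sub_eq_add_neg]

theorem fromBlocks_one_zero_one_mem_symplecticGroup_iff {X : Matrix l l R} :
    fromBlocks 1 X 0 1 ∈ symplecticGroup l R ↔ X.IsSymm := by
  simp [SymplecticGroup.fromBlocks_mem_iff, IsSymm]

theorem mem_symplecticGroup_iff_transpose_mul_fromBlocks_mul {A : Matrix (l ⊕ l) (l ⊕ l) R} :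
    A ∈ symplecticGroup l R ↔ Aᵀ * fromBlocks 0 1 (-1) 0 * A = fromBlocks 0 1 (-1) 0 := by
  have h : (fromBlocks 0 1 (-1) 0 : Matrix (l ⊕ l) (l ⊕ l) R) = -J l R := by
    simp [J, fromBlocks_neg]
  rw [SymplecticGroup.mem_iff', h, Matrix.mul_neg, Matrix.neg_mul, neg_inj]

section SubringClass

variable {σ : Type*} [SetLike σ (Matrix (l ⊕ l) (l ⊕ l) R)]
  [SubringClass σ (Matrix (l ⊕ l) (l ⊕ l) R)] {S : σ}

theorem fromBlocks_corner_mem_of_fromBlocks_one_mem (hJ : J l R ∈ S) {X : Matrix l l R}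
    (hX : fromBlocks 1 X 0 1 ∈ S) : fromBlocks X 0 0 0 ∈ S := by
  have h : (fromBlocks 1 X 0 1 - 1) * J l R = fromBlocks X 0 0 0 := by
    simp [J, ← fromBlocks_one, sub_eq_add_neg, fromBlocks_neg, fromBlocks_add, fromBlocks_multiply]
  exact h ▸ mul_mem (sub_mem hX (one_mem S)) hJ

theorem mem_of_J_mem_of_fromBlocks_corner_mem (hJ : J l R ∈ S)
    (hS : ∀ A : Matrix l l R, fromBlocks A 0 0 0 ∈ S) (M : Matrix (l ⊕ l) (l ⊕ l) R) :
    M ∈ S := by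
  rw [← M.fromBlocks_toBlocks, fromBlocks_eq_corners_mul_J]
  exact sub_mem (add_mem (sub_mem (hS _) (mul_mem (hS _) hJ)) (mul_mem hJ (hS _)))
    (mul_mem (mul_mem hJ (hS _)) hJ)

end SubringClass

variable (l R)

theorem adjoin_symplecticGroup_eq_top :
    Algebra.adjoin R (symplecticGroup l R : Set (Matrix (l ⊕ l) (l ⊕ l) R)) = ⊤ := by
  have hJ := Algebra.subset_adjoin (R := R) (SymplecticGroup.J_mem l R)
  refine eq_top_iff.2 fun M _ ↦ mem_of_J_mem_of_fromBlocks_corner_mem hJ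
    (fromBlocks_corner_mem_of_isSymm_corner_mem fun X hX ↦ ?_) M
  exact fromBlocks_corner_mem_of_fromBlocks_one_mem hJ
    (Algebra.subset_adjoin (fromBlocks_one_zero_one_mem_symplecticGroup_iff.2 hX))

theorem span_symplecticGroup_eq_top :
    Submodule.span R (symplecticGroup l R : Set (Matrix (l ⊕ l) (l ⊕ l) R)) = ⊤ := by
  rw [← (symplecticGroup l R).closure_eq, ← Algebra.adjoin_eq_span,
    adjoin_symplecticGroup_eq_top, Algebra.top_toSubmodule]

theorem span_symplectic_group_eq_top_general :
    Submodule.span R {A : Matrix (l ⊕ l) (l ⊕ l) R |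
        Aᵀ * fromBlocks 0 1 (-1) 0 * A = fromBlocks 0 1 (-1) 0} = ⊤ := by
  simp only [← mem_symplecticGroup_iff_transpose_mul_fromBlocks_mul]
  exact span_symplecticGroup_eq_top l R

end

/-- The ℂ-linear span of `Sp(2g, ℂ)` inside `M_{2g}(ℂ)` is everything. -/
theorem span_symplectic_group_eq_top
    (g : ℕ) (hg : 1 ≤ g) :
    Submodule.span ℂ {A : Matrix (Fin g ⊕ Fin g) (Fin g ⊕ Fin g) ℂ |
        Aᵀ * (fromBlocks 0 1 (-1) 0) * A = (fromBlocks 0 1 (-1) 0)} = ⊤ :=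
  span_symplectic_group_eq_top_general (Fin g) ℂ
end

section
/- Let g ≥ 1, let Sp(2g, ℂ) = {A ∈ M_{2g}(ℂ) : Aᵀ J A = J} with J = fromBlocks 0 1 (-1) 0, and let P ∈ M_{2g}(ℂ) be an invertible matrix. Let c = (c_{ij}) ∈ M_{2g}(ℂ) and d ∈ ℂ. If Σ_{i,j} c_{ij} (A·P)_{ij} = d for every A ∈ Sp(2g, ℂ), then c = 0 and d = 0. -/
open Matrix

/-!
For an alternating matrix `J`, let `T v = 1 + v vᵀJ` be the transvection along `v`. Expanding the
product gives `T u + T v - 1 - T u * T v = -(uᵀJv) u vᵀJ`. The left side is a linear combination of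
isometries with coefficients summing to zero, so any linear map that is constant on the
isometries of `J` kills the right side. When `J` is invertible, `w = vᵀJ` is arbitrary and
`-(uᵀJv) = w u`, so such a linear map kills every rank-one idempotent `u w`, and these span the
matrix algebra.
-/

section RankOneIdempotents

variable {n R : Type*} [Fintype n] [Ring R]

theorem span_vecMulVec_dotProduct_eq_one :
    Submodule.span R {A : Matrix n n R | ∃ u w, w ⬝ᵥ u = 1 ∧ vecMulVec u w = A} = ⊤ := by
  classical
  set S := Submodule.span R {A : Matrix n n R | ∃ u w, w ⬝ᵥ u = 1 ∧ vecMulVec u w = A}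
  have mem_of_dotProduct {u w : n → R} (h : w ⬝ᵥ u = 1) : vecMulVec u w ∈ S :=
    Submodule.subset_span ⟨u, w, h, rfl⟩
  have single_diag_mem (i : n) : single i i (1 : R) ∈ S := by
    rw [single_eq_single_vecMulVec_single]
    exact mem_of_dotProduct (by simp)
  have single_mem (i j : n) : single i j (1 : R) ∈ S := by
    obtain rfl | hij := eq_or_ne i j
    · exact single_diag_mem i
    -- The off-diagonal unit `E i j` is the difference of the idempotents
    -- `E i i + E i j` and `E i i`.
    have sum_mem : vecMulVec (Pi.single i 1) (Pi.single i 1 + Pi.single j 1) ∈ S :=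
      mem_of_dotProduct (by simp [hij])
    rw [vecMulVec_add, ← single_eq_single_vecMulVec_single,
      ← single_eq_single_vecMulVec_single] at sum_mem
    exact (S.add_mem_iff_right (single_diag_mem i)).1 sum_mem
  refine eq_top_iff.2 fun A _ => ?_
  rw [matrix_eq_sum_single A]
  refine S.sum_mem fun i _ => S.sum_mem fun j _ => ?_
  simpa only [smul_single, smul_eq_mul, mul_one] using S.smul_mem (A i j) (single_mem i j)

end RankOneIdempotents

section Isometries

variable {n R : Type*} [Fintype n] [DecidableEq n] [CommRing R]

/-- The matrices preserving the bilinear form with Gram matrix `J`. For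
`J = fromBlocks 0 1 (-1) 0` this is the symplectic group. -/
def matrixIsometries (J : Matrix n n R) : Submonoid (Matrix n n R) where
  carrier := {A | Aᵀ * J * A = J}
  one_mem' := by simp
  mul_mem' {A B} hA hB := by
    calc (A * B)ᵀ * J * (A * B) = Bᵀ * (Aᵀ * J * A) * B := by
          simp only [transpose_mul, Matrix.mul_assoc]
      _ = J := by rw [hA, hB]

/-- The symplectic transvection `x ↦ x + ⟨v, x⟩ v` of the form with Gram matrix `J`. -/
def symplecticTransvection (J : Matrix n n R) (v : n → R) : Matrix n n R :=
  1 + vecMulVec v (v ᵥ* J)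

theorem symplecticTransvection_mul (J : Matrix n n R) (u v : n → R) :
    symplecticTransvection J u * symplecticTransvection J v =
      symplecticTransvection J u + symplecticTransvection J v - 1 +
        (u ⬝ᵥ J *ᵥ v) • vecMulVec u (v ᵥ* J) := by
  rw [dotProduct_mulVec, ← vecMulVec_smul, ← vecMulVec_mul_vecMulVec]
  unfold symplecticTransvection
  noncomm_ring

variable {J : Matrix n n R}

theorem mulVec_eq_neg_vecMul_of_isAlt (hJ : (toBilin' J).IsAlt) (v : n → R) :
    J *ᵥ v = -(v ᵥ* J) := by
  refine dotProduct_eq _ _ fun u => ?_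
  have h := hJ.neg_eq v u
  rw [toBilin'_apply', toBilin'_apply', dotProduct_mulVec] at h
  rw [dotProduct_comm, neg_dotProduct, h]

theorem symplecticTransvection_mem_matrixIsometries (hJ : (toBilin' J).IsAlt) (v : n → R) :
    symplecticTransvection J v ∈ matrixIsometries J := by
  have dotProduct_self : v ⬝ᵥ v ᵥ* J = 0 := by
    rw [dotProduct_comm, ← dotProduct_mulVec, ← toBilin'_apply', hJ.self_eq_zero]
  have mul_transvection : J * symplecticTransvection J v = J - vecMulVec (v ᵥ* J) (v ᵥ* J) := by
    rw [symplecticTransvection, mul_add, mul_one, mul_vecMulVec, mulVec_eq_neg_vecMul_of_isAlt hJ,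
      neg_vecMulVec, sub_eq_add_neg]
  change (symplecticTransvection J v)ᵀ * J * symplecticTransvection J v = J
  rw [Matrix.mul_assoc, mul_transvection, symplecticTransvection, transpose_add, transpose_one,
    transpose_vecMulVec, add_mul, one_mul, mul_sub, vecMulVec_mul, vecMulVec_mul_vecMulVec,
    dotProduct_self, zero_smul, vecMulVec_zero, sub_zero, sub_add_cancel]

theorem smul_vecMulVec_mem_vectorSpan_matrixIsometries (hJ : (toBilin' J).IsAlt) (u v : n → R) :
    (u ⬝ᵥ J *ᵥ v) • vecMulVec u (v ᵥ* J) ∈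
      vectorSpan R (matrixIsometries J : Set (Matrix n n R)) := by
  have hu := symplecticTransvection_mem_matrixIsometries hJ u
  have hv := symplecticTransvection_mem_matrixIsometries hJ v
  have h := sub_mem (vsub_mem_vectorSpan R (mul_mem hu hv) hu)
    (vsub_mem_vectorSpan R hv (one_mem (matrixIsometries J)))
  rw [symplecticTransvection_mul, vsub_eq_sub, vsub_eq_sub] at h
  convert h using 1
  abel

theorem vectorSpan_matrixIsometries_eq_top (hJ : (toBilin' J).IsAlt) (hJu : IsUnit J) :
    vectorSpan R (matrixIsometries J : Set (Matrix n n R)) = ⊤ := by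
  rw [eq_top_iff, ← span_vecMulVec_dotProduct_eq_one, Submodule.span_le]
  rintro _ ⟨u, w, hwu, rfl⟩
  obtain ⟨v, rfl⟩ : ∃ v, v ᵥ* J = w := vecMul_surjective_iff_isUnit.2 hJu w
  have h := smul_vecMulVec_mem_vectorSpan_matrixIsometries hJ u v
  rwa [mulVec_eq_neg_vecMul_of_isAlt hJ, dotProduct_neg, dotProduct_comm, hwu, neg_one_smul,
    neg_mem_iff] at h

theorem eq_zero_of_trace_mul_matrixIsometries_eq (hJ : (toBilin' J).IsAlt) (hJu : IsUnit J)
    {B : Matrix n n R} {d : R} (h : ∀ A ∈ matrixIsometries J, trace (B * A) = d) : B = 0 := by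
  have trace_eq_zero : traceLinearMap n R R ∘ₗ LinearMap.mulLeft R B = 0 := by
    refine LinearMap.ext_on (vectorSpan_matrixIsometries_eq_top hJ hJu) ?_
    rintro _ ⟨A₁, hA₁, A₂, hA₂, rfl⟩
    simp [mul_sub, h A₁ hA₁, h A₂ hA₂]
  refine ext_iff_trace_mul_right.2 fun A => ?_
  simpa using LinearMap.congr_fun trace_eq_zero A

theorem no_linear_relation_on_symplectic_entries_mul_invertible_general
    {m : Type*} [Fintype m] (hJ : (toBilin' J).IsAlt) (hJu : IsUnit J)
    {P : Matrix n m R} (hP : Function.Injective P.mulVec) {c : Matrix n m R} {d : R}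
    (h : ∀ A : Matrix n n R, Aᵀ * J * A = J → ∑ i, ∑ j, c i j * (A * P) i j = d) :
    c = 0 ∧ d = 0 := by
  have sum_eq_trace (A : Matrix n n R) :
      ∑ i, ∑ j, c i j * (A * P) i j = trace (P * cᵀ * A) :=
    calc ∑ i, ∑ j, c i j * (A * P) i j = ∑ i, ∑ j, (c ⊙ (A * P)) i j := rfl
      _ = trace (A * P * cᵀ) := by rw [hadamard_comm, sum_hadamard_eq]
      _ = trace (P * cᵀ * A) := by rw [Matrix.mul_assoc, trace_mul_comm]
  have mul_transpose_eq_zero : P * cᵀ = 0 :=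
    eq_zero_of_trace_mul_matrixIsometries_eq hJ hJu fun A hA => (sum_eq_trace A).symm.trans (h A hA)
  constructor
  · have mulVec_row_eq_zero (i : n) : P *ᵥ c i = 0 :=
      funext fun k => congr_fun₂ mul_transpose_eq_zero k i
    exact funext fun i => hP ((mulVec_row_eq_zero i).trans P.mulVec_zero.symm)
  · rw [← h 1 (by simp), sum_eq_trace, mul_transpose_eq_zero, zero_mul, trace_zero]

end Isometries

section StandardSymplecticForm

variable {l R : Type*} [Fintype l] [DecidableEq l] [CommRing R]

theorem isAlt_toBilin'_fromBlocks_zero_one_neg_one_zero :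
    (toBilin' (fromBlocks 0 1 (-1) 0 : Matrix (l ⊕ l) (l ⊕ l) R)).IsAlt := by
  intro x
  simp [toBilin'_apply', fromBlocks_mulVec, neg_mulVec, dotProduct, Fintype.sum_sum_type, mul_comm]

theorem isUnit_fromBlocks_zero_one_neg_one_zero :
    IsUnit (fromBlocks 0 1 (-1) 0 : Matrix (l ⊕ l) (l ⊕ l) R) :=
  IsUnit.of_mul_eq_one (fromBlocks 0 (-1) 1 0) (by simp [fromBlocks_multiply])

end StandardSymplecticForm

/-- No ℂ-linear relations between the entries of `A·P` for `A` a generic element of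
`Sp(2g, ℂ)` and `P` a fixed invertible matrix. -/
theorem no_linear_relation_on_symplectic_entries_mul_invertible
    (g : ℕ) (hg : 1 ≤ g)
    (P : Matrix (Fin g ⊕ Fin g) (Fin g ⊕ Fin g) ℂ) (hP : IsUnit P)
    (c : Matrix (Fin g ⊕ Fin g) (Fin g ⊕ Fin g) ℂ) (d : ℂ)
    (h : ∀ A : Matrix (Fin g ⊕ Fin g) (Fin g ⊕ Fin g) ℂ,
      Aᵀ * (fromBlocks 0 1 (-1) 0) * A = (fromBlocks 0 1 (-1) 0) →
        ∑ i, ∑ j, c i j * (A * P) i j = d) :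
    c = 0 ∧ d = 0 :=
  no_linear_relation_on_symplectic_entries_mul_invertible_general
    isAlt_toBilin'_fromBlocks_zero_one_neg_one_zero isUnit_fromBlocks_zero_one_neg_one_zero
    (mulVec_injective_of_isUnit hP) h
end
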